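/- Let Ω ⊂ S² be a spherically convex set, Ĩ ⊂ S² the set of v with ⟨u,v⟩ = 0 for some u ∈ Ω (directions of great circles meeting Ω), and Ω* the dual cone component where ⟨u,v⟩ > 0 for all u ∈ Ω. Then α(Ω) := (1/2)∫_{u∈Ω}∫_{v∈Ĩ}|⟨u,v⟩| du dv satisfies α(Ω) = π|Ω| − ⟨c(Ω), c(Ω*)⟩, where |Ω| is the surface area of Ω and c(A) = ∫_A u du denotes the (unweighted) vector centroid of A ⊂ S². -/

import Mathlib

open MeasureTheory Metric

noncomputable section

abbrev E3 := EuclideanSpace ℝ (Fin 3)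

/-- The surface measure on the unit sphere `S² ⊂ ℝ³` (total mass `4π`). -/
def sphereMeasure : Measure (sphere (0 : E3) 1) := (volume : Measure E3).toSphere

/-- The cone spanned by a subset `Ω` of the unit sphere. -/
def sphericalCone (Ω : Set (sphere (0 : E3) 1)) : Set E3 :=
  {x : E3 | ∃ t : ℝ, 0 ≤ t ∧ ∃ u ∈ Ω, x = t • (u : E3)}

/-- The (unweighted) vector centroid `c(A) = ∫_A u du` of `A ⊂ S²`. -/
def sphCentroid (A : Set (sphere (0 : E3) 1)) : E3 :=
  ∫ u in A, (u : E3) ∂sphereMeasure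

/-!
For `u ∈ Ω`, the integral of `|⟪u, v⟫|` over the whole sphere does not depend on `u`; comparing the
integral of `|⟪u, x⟫| exp (-‖x‖²)` in polar and in Cartesian coordinates shows that it is twice the
volume of the unit ball of a hyperplane (`2π` in dimension three). A direction `v` outside `Ω̃` has
no zero on `Ω`, and if `⟪·, v⟫` changed sign on `Ω`, then the positive combination of a positive and
a negative point that is orthogonal to `v` would have to be the apex of the cone: `Ω` would lie on a
line and be null. So, up to this degenerate case, the complement of `Ω̃` is the disjoint union of
`Ω*` and `-Ω*`, on each of which `|⟪u, v⟫|` integrates to `⟪u, c(Ω*)⟫`. Hence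
`∫_Ω̃ |⟪u, v⟫| dv = 2π - 2 ⟪u, c(Ω*)⟫`, and it remains to integrate over `Ω`.

The set `Ω` is null measurable because the cone over it is convex, hence has a null frontier; the
same goes for `Ω*`, and therefore for `Ω̃`.
-/

section ConvexCones

variable {𝕜 V : Type*} [Field 𝕜] [LinearOrder 𝕜] [IsStrictOrderedRing 𝕜] [AddCommGroup V]
  [Module 𝕜 V]

lemma convexCone_smul_eq_smul_of_pos_of_neg (C : ConvexCone 𝕜 V) (φ : V →ₗ[𝕜] 𝕜)
    (hφ : ∀ x ∈ C, φ x = 0 → x = 0) {x y : V} (hx : x ∈ C) (hy : y ∈ C)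
    (hpos : 0 < φ x) (hneg : φ y < 0) : φ x • y = φ y • x := by
  have hmem : φ x • y + (-φ y) • x ∈ C :=
    C.add_mem (C.smul_mem hpos hy) (C.smul_mem (neg_pos.2 hneg) hx)
  have hzero := hφ _ hmem (by simp [mul_comm])
  rwa [neg_smul, ← sub_eq_add_neg, sub_eq_zero] at hzero

lemma convexCone_subset_span_of_pos_of_neg (C : ConvexCone 𝕜 V) (φ : V →ₗ[𝕜] 𝕜)
    (hφ : ∀ x ∈ C, φ x = 0 → x = 0) {x y : V} (hx : x ∈ C) (hy : y ∈ C)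
    (hpos : 0 < φ x) (hneg : φ y < 0) : (C : Set V) ⊆ Submodule.span 𝕜 {x} := by
  have mem_of_neg : ∀ z ∈ C, φ z < 0 → z ∈ Submodule.span 𝕜 {x} := fun z hz hzneg ↦ by
    rw [← Submodule.smul_mem_iff _ hpos.ne',
      convexCone_smul_eq_smul_of_pos_of_neg C φ hφ hx hz hpos hzneg]
    exact Submodule.smul_mem _ _ (Submodule.mem_span_singleton_self x)
  intro z hz
  rcases lt_trichotomy (φ z) 0 with hzneg | hzero | hzpos
  · exact mem_of_neg z hz hzneg
  · exact hφ z hz hzero ▸ Submodule.zero_mem _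
  · rw [SetLike.mem_coe, ← Submodule.smul_mem_iff _ hneg.ne,
      ← convexCone_smul_eq_smul_of_pos_of_neg C φ hφ hz hy hzpos hneg]
    exact Submodule.smul_mem _ _ (mem_of_neg y hy hneg)

end ConvexCones

section ToSphere

open Set Module
open scoped Pointwise

variable {E : Type*} [NormedAddCommGroup E] [NormedSpace ℝ E] [FiniteDimensional ℝ E]
  [MeasurableSpace E] [BorelSpace E] (μ : Measure E) [μ.IsAddHaarMeasure]

lemma toSphere_preimage_submodule {S : Submodule ℝ E} (hS : S ≠ ⊤) :
    μ.toSphere ((↑) ⁻¹' (S : Set E)) = 0 := by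
  have hSm : MeasurableSet (S : Set E) := S.closed_of_finiteDimensional.measurableSet
  have hsub : Ioo (0 : ℝ) 1 • ((↑) '' ((↑) ⁻¹' (S : Set E) : Set (sphere (0 : E) 1))) ⊆
      (S : Set E) := by
    rintro _ ⟨t, -, _, ⟨v, hv, rfl⟩, rfl⟩
    exact S.smul_mem t hv
  rw [μ.toSphere_apply' (measurable_subtype_coe hSm),
    measure_mono_null hsub (μ.addHaar_submodule S hS), mul_zero]

lemma toSphere_preimage_span_singleton (hdim : 1 < finrank ℝ E) (x : E) :
    μ.toSphere ((↑) ⁻¹' (Submodule.span ℝ {x} : Set E)) = 0 :=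
  toSphere_preimage_submodule μ (span_lt_top_of_card_lt_finrank (by simpa using hdim)).ne

lemma measurePreserving_neg_toSphere :
    MeasurePreserving (fun v : sphere (0 : E) 1 ↦ -v) μ.toSphere μ.toSphere := by
  have hmeas : Measurable fun v : sphere (0 : E) 1 ↦ -v := continuous_neg.measurable
  refine ⟨hmeas, Measure.ext fun s hs ↦ ?_⟩
  have hcone : Ioo (0 : ℝ) 1 • ((↑) '' ((fun v : sphere (0 : E) 1 ↦ -v) ⁻¹' s) : Set E) =
      -(Ioo (0 : ℝ) 1 • ((↑) '' s)) := by
    rw [← Set.smul_neg]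
    congr 1
    ext x
    constructor
    · rintro ⟨v, hv, rfl⟩
      exact ⟨-v, hv, by simp⟩
    · rintro ⟨v, hv, hvx⟩
      exact ⟨-v, by simpa using hv, by simp [hvx]⟩
  rw [Measure.map_apply hmeas hs, μ.toSphere_apply' (hmeas hs), μ.toSphere_apply' hs, hcone,
    Measure.measure_neg]

lemma nullMeasurableSet_toSphere_preimage {C : Set E} (hC : NullMeasurableSet C μ)
    (hsmul : ∀ r : ℝ, 0 < r → ∀ x ∈ C, r • x ∈ C) :
    NullMeasurableSet ((↑) ⁻¹' C) μ.toSphere := by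
  have hcoe : NullMeasurableSet ((↑) ⁻¹' C : Set ({0}ᶜ : Set E)) (μ.comap (↑)) :=
    (hC.mono_ac Measure.restrict_le_self.absolutelyContinuous).preimage
      (measurePreserving_subtype_coe (measurableSet_singleton _).compl).quasiMeasurePreserving
  have hpolar := hcoe.preimage
    (μ.measurePreserving_homeomorphUnitSphereProd.symm
      (homeomorphUnitSphereProd E).toMeasurableEquiv).quasiMeasurePreserving
  have : NeZero (Measure.volumeIoiPow (finrank ℝ E - 1)) := ⟨fun h ↦ absurd
    (by simpa [h] using Measure.volumeIoiPow_apply_Iio (finrank ℝ E - 1) ⟨1, mem_Ioi.2 one_pos⟩)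
    (Nat.cast_add_one_pos (α := ℝ) (finrank ℝ E - 1)).not_ge⟩
  rw [← Measure.nullMeasurableSet_preimage_fst (ν := Measure.volumeIoiPow (finrank ℝ E - 1))]
  convert hpolar using 1
  ext ⟨v, r⟩
  refine ⟨hsmul r r.2 v, fun hrv ↦ ?_⟩
  simpa [smul_smul, (mem_Ioi.1 r.2).ne'] using hsmul (r : ℝ)⁻¹ (inv_pos.2 r.2) _ hrv

lemma integrable_toSphere_of_continuous {F : Type*} [NormedAddCommGroup F]
    {f : sphere (0 : E) 1 → F} (hf : Continuous f) : Integrable f μ.toSphere :=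
  hf.integrable_of_hasCompactSupport (.of_compactSpace f)

lemma integral_volumeIoiPow {F : Type*} [NormedAddCommGroup F] [NormedSpace ℝ F]
    (n : ℕ) (g : ℝ → F) :
    ∫ r : Ioi (0 : ℝ), g r ∂Measure.volumeIoiPow n = ∫ r in Ioi (0 : ℝ), r ^ n • g r := by
  simp only [Measure.volumeIoiPow, ENNReal.ofReal]
  rw [integral_withDensity_eq_integral_smul
      (measurable_subtype_coe.pow_const n).real_toNNReal,
    integral_subtype_comap measurableSet_Ioi fun r ↦ Real.toNNReal (r ^ n) • g r]
  refine setIntegral_congr_fun measurableSet_Ioi fun r hr ↦ ?_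
  rw [NNReal.smul_def, Real.coe_toNNReal _ (pow_nonneg hr.out.le n)]

lemma integral_homogeneous_mul_fun_norm [Nontrivial E] {f : E → ℝ} {k : ℕ}
    (hf : ∀ r : ℝ, 0 < r → ∀ x, f (r • x) = r ^ k * f x) (g : ℝ → ℝ) :
    ∫ x, f x * g ‖x‖ ∂μ = (∫ v : sphere (0 : E) 1, f v ∂μ.toSphere) *
      ∫ r in Ioi (0 : ℝ), r ^ (finrank ℝ E - 1) * (r ^ k * g r) := by
  calc ∫ x, f x * g ‖x‖ ∂μ
      = ∫ x : ({0}ᶜ : Set E), f x * g ‖(x : E)‖ ∂μ.comap (↑) := by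
        rw [integral_subtype_comap (measurableSet_singleton _).compl fun x : E ↦ f x * g ‖x‖,
          restrict_compl_singleton]
    _ = ∫ p : sphere (0 : E) 1 × Ioi (0 : ℝ), f p.1 * ((p.2 : ℝ) ^ k * g p.2)
          ∂μ.toSphere.prod (.volumeIoiPow (finrank ℝ E - 1)) := by
        rw [← μ.measurePreserving_homeomorphUnitSphereProd.integral_comp
          (Homeomorph.measurableEmbedding _)]
        refine integral_congr_ae (.of_forall fun x ↦ ?_)
        have hx : 0 < ‖(x : E)‖ := norm_pos_iff.2 x.2
        simp only [homeomorphUnitSphereProd_apply_snd_coe, homeomorphUnitSphereProd_apply_fst_coe,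
          hf _ (inv_pos.2 hx), inv_pow]
        field_simp
    _ = _ := by
        rw [integral_prod_mul (fun v : sphere (0 : E) 1 ↦ f v)
            (fun r : Ioi (0 : ℝ) ↦ (r : ℝ) ^ k * g r),
          integral_volumeIoiPow (finrank ℝ E - 1) fun r ↦ r ^ k * g r]
        simp only [smul_eq_mul]

end ToSphere

section Gaussian

open Set Module Real
open scoped RealInnerProductSpace

lemma integral_abs_mul_exp_neg_sq : ∫ t : ℝ, |t| * exp (-t ^ 2) = 1 := by
  have habs := integral_comp_abs (f := fun t : ℝ ↦ t * exp (-t ^ 2))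
  have hhalf := integral_rpow_mul_exp_neg_rpow (p := 2) (q := 1) (by norm_num) (by norm_num)
  norm_num at hhalf
  simp only [sq_abs] at habs
  rw [habs, hhalf]
  norm_num

lemma integral_Ioi_pow_mul_exp_neg_sq (n : ℕ) :
    ∫ r in Ioi (0 : ℝ), r ^ n * exp (-r ^ 2) = Gamma ((n + 1) / 2) / 2 := by
  have h := integral_rpow_mul_exp_neg_rpow (p := 2) (q := n) two_pos
    (neg_one_lt_zero.trans_le n.cast_nonneg)
  simp only [rpow_natCast, rpow_ofNat] at h
  rw [h]
  ring

lemma integral_fun_apply_mul_exp_neg_norm_sq {ι : Type*} [Fintype ι] (i : ι) (f : ℝ → ℝ) :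
    ∫ y : EuclideanSpace ℝ ι, f (y i) * exp (-‖y‖ ^ 2) =
      √π ^ (Fintype.card ι - 1) * ∫ t, f t * exp (-t ^ 2) := by
  classical
  have hprod (y : ι → ℝ) : f (y i) * exp (-‖WithLp.toLp 2 y‖ ^ 2) =
      ∏ j, (if j = i then f (y j) else 1) * exp (-y j ^ 2) := by
    rw [Finset.prod_mul_distrib, ← exp_sum, EuclideanSpace.norm_sq_eq]
    simp [Finset.sum_neg_distrib]
  have hgauss : ∫ t : ℝ, exp (-t ^ 2) = √π := by simpa using integral_gaussian 1
  rw [← (PiLp.volume_preserving_toLp ι).integral_comp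
    (MeasurableEquiv.toLp 2 _).measurableEmbedding]
  simp only [hprod]
  rw [integral_fintype_prod_volume_eq_prod fun j t ↦ (if j = i then f t else 1) * exp (-t ^ 2),
    ← Finset.mul_prod_erase _ _ (Finset.mem_univ i), mul_comm,
    Finset.prod_congr rfl (g := fun _ ↦ √π) fun j hj ↦ by simp [Finset.ne_of_mem_erase hj, hgauss]]
  simp

lemma exists_orthonormalBasis_apply_eq {𝕜 E ι : Type*} [RCLike 𝕜] [NormedAddCommGroup E]
    [InnerProductSpace 𝕜 E] [FiniteDimensional 𝕜 E] [Fintype ι]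
    (hι : finrank 𝕜 E = Fintype.card ι) (i : ι) {u : E} (hu : ‖u‖ = 1) :
    ∃ b : OrthonormalBasis ι 𝕜 E, b i = u := by
  have hon : Orthonormal 𝕜 (({i} : Set ι).domRestrict fun _ ↦ u) :=
    ⟨fun _ ↦ hu, fun j k hjk ↦ absurd (Subsingleton.elim j k) hjk⟩
  obtain ⟨b, hb⟩ := hon.exists_orthonormalBasis_extension_of_card_eq hι
  exact ⟨b, hb i rfl⟩

variable {E : Type*} [NormedAddCommGroup E] [InnerProductSpace ℝ E] [FiniteDimensional ℝ E]
  [MeasurableSpace E] [BorelSpace E]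

lemma integral_fun_inner_mul_exp_neg_norm_sq {u : E} (hu : ‖u‖ = 1) (f : ℝ → ℝ) :
    ∫ x : E, f ⟪u, x⟫ * exp (-‖x‖ ^ 2) =
      √π ^ (finrank ℝ E - 1) * ∫ t, f t * exp (-t ^ 2) := by
  have : Nontrivial E := ⟨u, 0, norm_ne_zero_iff.1 (by simp [hu])⟩
  let i : Fin (finrank ℝ E) := ⟨0, finrank_pos⟩
  obtain ⟨b, hb⟩ := exists_orthonormalBasis_apply_eq (Fintype.card_fin _).symm i hu
  rw [← Fintype.card_fin (finrank ℝ E), ← integral_fun_apply_mul_exp_neg_norm_sq i f,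
    ← b.measurePreserving_repr.integral_comp b.repr.toHomeomorph.measurableEmbedding]
  simp only [b.repr_apply_apply, hb, b.repr.norm_map]

-- `√π ^ (n - 1) / Γ ((n + 1) / 2)` is the volume of the unit ball of dimension `n - 1`.
lemma integral_toSphere_abs_inner {u : E} (hu : ‖u‖ = 1) :
    ∫ v : sphere (0 : E) 1, |⟪u, v⟫| ∂(volume : Measure E).toSphere =
      2 * (√π ^ (finrank ℝ E - 1) / Gamma ((finrank ℝ E + 1) / 2)) := by
  have : Nontrivial E := ⟨u, 0, norm_ne_zero_iff.1 (by simp [hu])⟩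
  have hpolar := integral_homogeneous_mul_fun_norm (volume : Measure E) (f := fun x ↦ |⟪u, x⟫|)
    (k := 1) (fun r hr x ↦ by simp [inner_smul_right, abs_mul, abs_of_pos hr])
    fun r ↦ exp (-r ^ 2)
  have hradial : ∫ r in Ioi (0 : ℝ), r ^ (finrank ℝ E - 1) * (r ^ 1 * exp (-r ^ 2)) =
      Gamma ((finrank ℝ E + 1) / 2) / 2 := by
    simp only [← mul_assoc, ← pow_add, Nat.sub_add_cancel finrank_pos]
    exact integral_Ioi_pow_mul_exp_neg_sq _
  have hGamma : 0 < Gamma ((finrank ℝ E + 1 : ℝ) / 2) := Gamma_pos_of_pos (by positivity)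
  rw [integral_fun_inner_mul_exp_neg_norm_sq hu abs, integral_abs_mul_exp_neg_sq, hradial] at hpolar
  field_simp
  linarith

end Gaussian

section SphericalConvexity

open Set Module
open scoped RealInnerProductSpace Pointwise

variable {E : Type*} [NormedAddCommGroup E] [InnerProductSpace ℝ E]

/-- The cone spanned by a subset `Ω` of the unit sphere, with the apex included when `Ω` is
nonempty; `Ω` is spherically convex when this cone is convex. -/
def sphereCone (Ω : Set (sphere (0 : E) 1)) : Set E :=
  {x : E | ∃ t : ℝ, 0 ≤ t ∧ ∃ u ∈ Ω, x = t • (u : E)}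

/-- The set `Ω̃` of unit normals to the hyperplanes through the origin that meet `Ω`. -/
def sphereNormals (Ω : Set (sphere (0 : E) 1)) : Set (sphere (0 : E) 1) :=
  {v | ∃ u ∈ Ω, ⟪(u : E), v⟫ = 0}

/-- The strict dual `Ω*` of a subset `Ω` of the unit sphere, one of the two components of the
complement of `Ω̃`. -/
def sphereDual (Ω : Set (sphere (0 : E) 1)) : Set (sphere (0 : E) 1) :=
  {v | ∀ u ∈ Ω, 0 < ⟪(u : E), v⟫}

/-- The unnormalized centroid `c(Ω)` of a subset `Ω` of the unit sphere, with respect to the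
surface measure induced by `μ`. -/
def sphereCentroid [MeasurableSpace E] (μ : Measure E) (Ω : Set (sphere (0 : E) 1)) : E :=
  ∫ u in Ω, (u : E) ∂μ.toSphere

variable {Ω : Set (sphere (0 : E) 1)}

lemma mem_sphereCone_of_mem {u : sphere (0 : E) 1} (hu : u ∈ Ω) : (u : E) ∈ sphereCone Ω :=
  ⟨1, zero_le_one, u, hu, (one_smul ℝ _).symm⟩

lemma smul_mem_sphereCone {r : ℝ} (hr : 0 ≤ r) {x : E} (hx : x ∈ sphereCone Ω) :
    r • x ∈ sphereCone Ω := by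
  obtain ⟨t, ht, u, hu, rfl⟩ := hx
  exact ⟨r * t, mul_nonneg hr ht, u, hu, smul_smul r t _⟩

lemma preimage_sphereCone : ((↑) ⁻¹' sphereCone Ω : Set (sphere (0 : E) 1)) = Ω := by
  ext v
  refine ⟨fun ⟨t, ht, u, hu, hv⟩ ↦ ?_, mem_sphereCone_of_mem⟩
  have ht1 : t = 1 := by
    simpa [norm_smul, abs_of_nonneg ht] using (congrArg norm hv).symm
  rwa [Subtype.ext (hv.trans (by rw [ht1, one_smul]) : (v : E) = u)]

lemma disjoint_sphereDual_neg (hΩ : Ω.Nonempty) : Disjoint (sphereDual Ω) (-sphereDual Ω) := by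
  obtain ⟨u, hu⟩ := hΩ
  refine Set.disjoint_left.2 fun v hv hv_neg ↦ ?_
  have h := hv_neg u hu
  rw [coe_neg_sphere, inner_neg_right] at h
  exact (hv u hu).not_gt (neg_pos.1 h)

lemma sphereDual_union_neg_subset_compl_sphereNormals :
    sphereDual Ω ∪ -sphereDual Ω ⊆ (sphereNormals Ω)ᶜ := by
  rintro v (hv | hv) ⟨u, hu, h⟩
  · exact (hv u hu).ne' h
  · simpa [h] using hv u hu

lemma subset_preimage_span_of_inner_pos_of_inner_neg (hconv : Convex ℝ (sphereCone Ω))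
    {u v w : sphere (0 : E) 1} (hv : v ∉ sphereNormals Ω) (hu : u ∈ Ω) (hw : w ∈ Ω)
    (hpos : 0 < ⟪(u : E), v⟫) (hneg : ⟪(w : E), v⟫ < 0) :
    Ω ⊆ (↑) ⁻¹' (Submodule.span ℝ {(u : E)} : Set E) := by
  have hmem {z : sphere (0 : E) 1} (hz : z ∈ Ω) : (z : E) ∈ ConvexCone.hull ℝ (sphereCone Ω) :=
    ConvexCone.subset_hull (mem_sphereCone_of_mem hz)
  have hzero : ∀ x ∈ ConvexCone.hull ℝ (sphereCone Ω), innerₛₗ ℝ (v : E) x = 0 → x = 0 := by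
    intro x hx hxv
    obtain ⟨c, -, _, ⟨t, -, z, hz, rfl⟩, rfl⟩ := (ConvexCone.mem_hull_of_convex hconv).1 hx
    have hzv : ⟪(v : E), z⟫ ≠ 0 := fun h ↦ hv ⟨z, hz, by rwa [real_inner_comm]⟩
    have hct : c * t = 0 := by simpa [inner_smul_right, hzv] using hxv
    simp only [smul_smul, hct, zero_smul]
  rw [← real_inner_comm] at hpos hneg
  exact fun z hz ↦ convexCone_subset_span_of_pos_of_neg _ (innerₛₗ ℝ (v : E)) hzero (hmem hu)
    (hmem hw) hpos hneg (hmem hz)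

lemma compl_sphereNormals (hconv : Convex ℝ (sphereCone Ω))
    (hline : ∀ x : E, ¬ Ω ⊆ (↑) ⁻¹' (Submodule.span ℝ {x} : Set E)) :
    (sphereNormals Ω)ᶜ = sphereDual Ω ∪ -sphereDual Ω := by
  refine Subset.antisymm (fun v hv ↦ ?_) sphereDual_union_neg_subset_compl_sphereNormals
  by_contra hsign
  simp only [sphereDual, mem_union, Set.mem_neg, mem_ofPred_eq, not_or, not_forall, not_lt,
    coe_neg_sphere, inner_neg_right, neg_nonpos] at hsign
  obtain ⟨⟨w, hw, hwv⟩, u, hu, huv⟩ := hsign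
  exact hline u <| subset_preimage_span_of_inner_pos_of_inner_neg hconv hv hu hw
    (huv.lt_of_ne fun h ↦ hv ⟨u, hu, h.symm⟩) (hwv.lt_of_ne fun h ↦ hv ⟨w, hw, h⟩)

section Haar

variable [FiniteDimensional ℝ E] [MeasurableSpace E] [BorelSpace E] (μ : Measure E)
  [μ.IsAddHaarMeasure]

lemma nullMeasurableSet_of_convex_sphereCone (hconv : Convex ℝ (sphereCone Ω)) :
    NullMeasurableSet Ω μ.toSphere := by
  rw [← preimage_sphereCone (Ω := Ω)]
  exact nullMeasurableSet_toSphere_preimage μ (hconv.nullMeasurableSet μ)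
    fun r hr x hx ↦ smul_mem_sphereCone hr.le hx

lemma nullMeasurableSet_sphereDual (Ω : Set (sphere (0 : E) 1)) :
    NullMeasurableSet (sphereDual Ω) μ.toSphere := by
  have hconv : Convex ℝ {x : E | ∀ u ∈ Ω, 0 < ⟪(u : E), x⟫} := by
    simp only [ofPred_forall]
    exact convex_iInter₂ fun u _ ↦ convex_halfSpace_gt (innerₛₗ ℝ (u : E)).isLinear 0
  refine nullMeasurableSet_toSphere_preimage μ (hconv.nullMeasurableSet μ) fun r hr x hx u hu ↦ ?_
  rw [inner_smul_right]
  exact mul_pos hr (hx u hu)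

lemma setIntegral_inner_toSphere (x : E) (Ω : Set (sphere (0 : E) 1)) :
    ∫ v in Ω, ⟪x, v⟫ ∂μ.toSphere = ⟪x, sphereCentroid μ Ω⟫ :=
  integral_inner (integrable_toSphere_of_continuous μ continuous_subtype_val).integrableOn x

lemma setIntegral_neg_abs_inner_toSphere (x : E) (s : Set (sphere (0 : E) 1)) :
    ∫ v in -s, |⟪x, v⟫| ∂μ.toSphere = ∫ v in s, |⟪x, v⟫| ∂μ.toSphere := by
  rw [← (measurePreserving_neg_toSphere μ).setIntegral_preimage_emb
    (Homeomorph.neg _).measurableEmbedding _ s]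
  simp [inner_neg_right, Set.neg_preimage]

lemma setIntegral_sphereDual_abs_inner {u : sphere (0 : E) 1} (hu : u ∈ Ω) :
    ∫ v in sphereDual Ω, |⟪(u : E), v⟫| ∂μ.toSphere =
      ⟪sphereCentroid μ (sphereDual Ω), (u : E)⟫ := by
  rw [real_inner_comm, ← setIntegral_inner_toSphere]
  exact setIntegral_congr_fun₀ (nullMeasurableSet_sphereDual μ Ω) fun v hv ↦ abs_of_pos (hv u hu)

lemma setIntegral_sphereNormals_abs_inner
    (hcompl : (sphereNormals Ω)ᶜ = sphereDual Ω ∪ -sphereDual Ω)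
    {u : sphere (0 : E) 1} (hu : u ∈ Ω) :
    ∫ v in sphereNormals Ω, |⟪(u : E), v⟫| ∂μ.toSphere =
      ∫ v, |⟪(u : E), v⟫| ∂μ.toSphere - 2 * ⟪sphereCentroid μ (sphereDual Ω), (u : E)⟫ := by
  have hint : Integrable (fun v : sphere (0 : E) 1 ↦ |⟪(u : E), v⟫|) μ.toSphere :=
    integrable_toSphere_of_continuous μ (by fun_prop)
  have hdual := nullMeasurableSet_sphereDual μ Ω
  have hneg : NullMeasurableSet (-sphereDual Ω) μ.toSphere :=
    hdual.preimage (measurePreserving_neg_toSphere μ).quasiMeasurePreserving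
  have hnormals : NullMeasurableSet (sphereNormals Ω) μ.toSphere := by
    rw [← compl_compl (sphereNormals Ω), hcompl]
    exact (hdual.union hneg).compl
  rw [← integral_add_compl₀ hnormals hint, hcompl,
    setIntegral_union₀ (disjoint_sphereDual_neg ⟨u, hu⟩).aedisjoint hneg
      hint.integrableOn hint.integrableOn,
    setIntegral_neg_abs_inner_toSphere, setIntegral_sphereDual_abs_inner μ hu]
  ring

end Haar

theorem alpha_eq_pi_area_sub_inner_centroids_general [FiniteDimensional ℝ E] [MeasurableSpace E]
    [BorelSpace E] (hdim : 1 < finrank ℝ E) (hconv : Convex ℝ (sphereCone Ω)) :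
    (1 / 2 : ℝ) * (∫ u in Ω, ∫ v in sphereNormals Ω, |⟪(u : E), v⟫|
        ∂(volume : Measure E).toSphere ∂(volume : Measure E).toSphere) =
      √Real.pi ^ (finrank ℝ E - 1) / Real.Gamma ((finrank ℝ E + 1) / 2) *
          (volume : Measure E).toSphere.real Ω -
        ⟪sphereCentroid volume Ω, sphereCentroid volume (sphereDual Ω)⟫ := by
  by_cases hnull : (volume : Measure E).toSphere Ω = 0
  · simp [sphereCentroid, Measure.restrict_eq_zero.2 hnull, measureReal_def, hnull]
  have hline (x : E) : ¬ Ω ⊆ (↑) ⁻¹' (Submodule.span ℝ {x} : Set E) := fun hΩ ↦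
    hnull (measure_mono_null hΩ (toSphere_preimage_span_singleton volume hdim x))
  have hinner : EqOn
      (fun u : sphere (0 : E) 1 ↦
        ∫ v in sphereNormals Ω, |⟪(u : E), v⟫| ∂(volume : Measure E).toSphere)
      (fun u ↦ 2 * (√Real.pi ^ (finrank ℝ E - 1) / Real.Gamma ((finrank ℝ E + 1) / 2)) -
        2 * ⟪sphereCentroid volume (sphereDual Ω), (u : E)⟫) Ω := fun u hu ↦ by
    simp only [setIntegral_sphereNormals_abs_inner volume (compl_sphereNormals hconv hline) hu,
      integral_toSphere_abs_inner (norm_eq_of_mem_sphere u)]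
  rw [setIntegral_congr_fun₀ (nullMeasurableSet_of_convex_sphereCone volume hconv) hinner,
    integral_sub (integrable_const _)
      (integrable_toSphere_of_continuous volume (by fun_prop)).integrableOn,
    setIntegral_const, integral_const_mul, setIntegral_inner_toSphere, smul_eq_mul,
    real_inner_comm (sphereCentroid volume Ω)]
  ring

end SphericalConvexity

/-- For a spherically convex set `Ω ⊂ S²`, with `Ĩ` the set of directions of great circles
meeting `Ω` and `Ω*` the dual solid cone, one has
`α(Ω) := (1/2)∫_{u∈Ω}∫_{v∈Ĩ}|⟨u,v⟩| du dv = π|Ω| − ⟨c(Ω), c(Ω*)⟩`. -/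
theorem alpha_eq_pi_area_sub_inner_centroids
    (Ω : Set (sphere (0 : E3) 1)) (hne : Ω.Nonempty) (hcl : IsClosed Ω)
    (hconv : Convex ℝ (sphericalCone Ω)) :
    (1 / 2 : ℝ) *
        (∫ u in Ω,
          ∫ v in {v : sphere (0 : E3) 1 | ∃ u ∈ Ω, inner (𝕜 := ℝ) (u : E3) (v : E3) = 0},
            |inner (𝕜 := ℝ) (u : E3) (v : E3)| ∂sphereMeasure ∂sphereMeasure)
      = Real.pi * (sphereMeasure Ω).toReal -
          inner (𝕜 := ℝ) (sphCentroid Ω)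
            (sphCentroid {v : sphere (0 : E3) 1 | ∀ u ∈ Ω, 0 < inner (𝕜 := ℝ) (u : E3) (v : E3)}) := by
  have hball : √Real.pi ^ (Module.finrank ℝ E3 - 1) /
      Real.Gamma ((Module.finrank ℝ E3 + 1) / 2) = Real.pi := by
    norm_num [Real.sq_sqrt Real.pi_pos.le]
  exact hball ▸ alpha_eq_pi_area_sub_inner_centroids_general (by simp) hconv

end
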